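/- arXiv:math/0701614 — 2 statements merged into one kernel-verified Lean document; each statement's English description precedes it below -/
import Mathlib

section
/- Let k be a field of characteristic different from 2, let a, b ∈ k be nonzero, and suppose the polynomial Y² − (aX⁴ + b) is irreducible in k[X][Y] (equivalently, aX⁴ + b is not a square in k(X)), so that the quotient ring R = k[X, Y]/(Y² − aX⁴ − b) is an integral domain. Let K be the fraction field of R (the function field of the genus one hyperelliptic curve y² = ax⁴ + b). Then the quaternion algebra (a, b)_K over K (with basis 1, i, j, ij and relations i² = a, j² = b, ij = −ji) is split: it is isomorphic as a K-algebra to the 2×2 matrix algebra Mat₂(K). -/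
set_option maxHeartbeats 1000000
set_option synthInstance.maxHeartbeats 400000

open Polynomial
open scoped Quaternion

/-!
On the curve, `b = y² - a(x²)²` is the norm of `y + x²√a`. Multiplying the second generator `j` by
an element `y + ui` of norm `n` multiplies its square by `n`, so `(a, 1) ≃ (a, b)`, and `(a, 1)` is
split: there `i` and `j` act as the matrices `!![0, a; 1, 0]` and `!![1, 0; 0, -1]`.
-/

open QuaternionAlgebra (Basis)

section NormTwist

variable {R A : Type*} [CommRing R] [Ring A] [Algebra R A] {a b c y u : R}

/-- The quaternion basis `i, (y + u i) j` obtained from `q = (i, j, k)`; the square of its second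
unit is that of `j` times the norm of `y + u i`. -/
def normTwistBasis (q : Basis A a 0 b) (h : c = b * (y ^ 2 - a * u ^ 2)) : Basis A a 0 c where
  i := q.i
  j := y • q.j + u • q.k
  k := y • q.k + (a * u) • q.j
  i_mul_i := q.i_mul_i
  j_mul_j := by
    subst h
    simp only [mul_add, add_mul, smul_mul_assoc, mul_smul_comm, q.j_mul_j, q.j_mul_k, q.k_mul_j,
      q.k_mul_k]
    module
  i_mul_j := by
    simp only [mul_add, mul_smul_comm, q.i_mul_j, q.i_mul_k]
    module
  j_mul_i := by
    simp only [add_mul, smul_mul_assoc, q.j_mul_i, q.k_mul_i]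
    module

/-- The homomorphism `(a, c) → (a, b)` fixing `i` and sending `j` to `(y + u i) j`, where `c` is `b`
times the norm of `y + u i`. -/
def normTwistHom (h : c = b * (y ^ 2 - a * u ^ 2)) : ℍ[R,a,c] →ₐ[R] ℍ[R,a,b] :=
  (normTwistBasis (.self R) h).liftHom

theorem normTwistHom_i (h : c = b * (y ^ 2 - a * u ^ 2)) :
    normTwistHom h (Basis.self R).i = (Basis.self R).i := by
  simp [normTwistHom, normTwistBasis, Basis.lift]

theorem normTwistHom_j (h : c = b * (y ^ 2 - a * u ^ 2)) :
    normTwistHom h (Basis.self R).j = y • (Basis.self R).j + u • (Basis.self R).k := by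
  simp [normTwistHom, normTwistBasis, Basis.lift]

theorem normTwistHom_k (h : c = b * (y ^ 2 - a * u ^ 2)) :
    normTwistHom h (Basis.self R).k = y • (Basis.self R).k + (a * u) • (Basis.self R).j := by
  simp [normTwistHom, normTwistBasis, Basis.lift]

-- The two conditions on coefficients say that `(y + u i) (y' + u' i) = 1`.
theorem normTwistHom_comp_eq_id {y' u' : R} (h : c = b * (y ^ 2 - a * u ^ 2))
    (h' : b = c * (y' ^ 2 - a * u' ^ 2)) (hre : y * y' + a * (u * u') = 1)
    (him : y * u' + u * y' = 0) :
    (normTwistHom h).comp (normTwistHom h') = AlgHom.id R ℍ[R,a,b] := by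
  apply QuaternionAlgebra.hom_ext
  · simp only [AlgHom.comp_apply, normTwistHom_i, AlgHom.id_apply]
  · simp only [AlgHom.comp_apply, normTwistHom_j, normTwistHom_k, map_add, map_smul,
      AlgHom.id_apply]
    linear_combination (norm := module) hre • (Basis.self R).j + him • (Basis.self R).k

theorem nonempty_quaternionAlgebra_mul_norm_algEquiv (a b : R) (hn : IsUnit (y ^ 2 - a * u ^ 2)) :
    Nonempty (ℍ[R,a,b * (y ^ 2 - a * u ^ 2)] ≃ₐ[R] ℍ[R,a,b]) := by
  obtain ⟨m, hm⟩ := hn.exists_right_inv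
  have hb : b = b * (y ^ 2 - a * u ^ 2) * ((m * y) ^ 2 - a * (-(m * u)) ^ 2) := by
    linear_combination -b * ((y ^ 2 - a * u ^ 2) * m + 1) * hm
  exact ⟨.ofAlgHom (normTwistHom rfl) (normTwistHom hb)
    (normTwistHom_comp_eq_id _ _ (by linear_combination hm) (by ring))
    (normTwistHom_comp_eq_id _ _ (by linear_combination hm) (by ring))⟩

end NormTwist

section Split

variable {R : Type*} [CommRing R]

/-- The basis of `(a, 1)` in the `2 × 2` matrices: `i` is multiplication by `√a` in the basis
`1, √a` of `R[√a]`, and `j` is conjugation `√a ↦ -√a`. -/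
def matrixQuaternionBasis (a : R) : Basis (Matrix (Fin 2) (Fin 2) R) a 0 (1 : R) where
  i := !![0, a; 1, 0]
  j := !![1, 0; 0, -1]
  k := !![0, -a; 1, 0]
  i_mul_i := by simp [Matrix.one_fin_two]
  j_mul_j := by simp [Matrix.one_fin_two]
  i_mul_j := by simp
  j_mul_i := by simp

theorem matrixQuaternionBasis_liftHom_apply (a : R) (x : ℍ[R,a,1]) :
    (matrixQuaternionBasis a).liftHom x =
      !![x.re + x.imJ, a * (x.imI - x.imK); x.imI + x.imK, x.re - x.imJ] := by
  ext i j
  fin_cases i <;> fin_cases j <;>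
    simp [Basis.lift, matrixQuaternionBasis, Matrix.algebraMap_matrix_apply] <;>
    ring

theorem matrixQuaternionBasis_liftHom_bijective {a : R} (h2 : IsUnit (2 : R)) (ha : IsUnit a) :
    Function.Bijective (matrixQuaternionBasis a).liftHom := by
  obtain ⟨t, ht⟩ := h2.exists_right_inv
  obtain ⟨s, hs⟩ := ha.exists_right_inv
  refine Function.bijective_iff_has_inverse.mpr ⟨fun M ↦
    ⟨t * (M 0 0 + M 1 1), t * (M 1 0 + s * M 0 1), t * (M 0 0 - M 1 1), t * (M 1 0 - s * M 0 1)⟩,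
    fun x ↦ ?_, fun M ↦ ?_⟩
  · rw [matrixQuaternionBasis_liftHom_apply]
    ext
    · change t * ((x.re + x.imJ) + (x.re - x.imJ)) = x.re
      linear_combination x.re * ht
    · change t * ((x.imI + x.imK) + s * (a * (x.imI - x.imK))) = x.imI
      linear_combination x.imI * ht + t * (x.imI - x.imK) * hs
    · change t * ((x.re + x.imJ) - (x.re - x.imJ)) = x.imJ
      linear_combination x.imJ * ht
    · change t * ((x.imI + x.imK) - s * (a * (x.imI - x.imK))) = x.imK
      linear_combination x.imK * ht - t * (x.imI - x.imK) * hs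
  · rw [matrixQuaternionBasis_liftHom_apply]
    ext i j
    fin_cases i <;> fin_cases j
    · change t * (M 0 0 + M 1 1) + t * (M 0 0 - M 1 1) = M 0 0
      linear_combination M 0 0 * ht
    · change a * (t * (M 1 0 + s * M 0 1) - t * (M 1 0 - s * M 0 1)) = M 0 1
      linear_combination M 0 1 * ht + 2 * t * M 0 1 * hs
    · change t * (M 1 0 + s * M 0 1) + t * (M 1 0 - s * M 0 1) = M 1 0
      linear_combination M 1 0 * ht
    · change t * (M 0 0 + M 1 1) - t * (M 0 0 - M 1 1) = M 1 1
      linear_combination M 1 1 * ht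

theorem nonempty_quaternionAlgebra_algEquiv_matrix {a b y u : R} (h2 : IsUnit (2 : R))
    (ha : IsUnit a) (hb : IsUnit b) (h : y ^ 2 = a * u ^ 2 + b) :
    Nonempty (ℍ[R,a,b] ≃ₐ[R] Matrix (Fin 2) (Fin 2) R) := by
  obtain rfl : b = 1 * (y ^ 2 - a * u ^ 2) := by linear_combination -h
  obtain ⟨twist⟩ := nonempty_quaternionAlgebra_mul_norm_algEquiv a 1 (one_mul (_ : R) ▸ hb)
  exact ⟨twist.trans (.ofBijective _ (matrixQuaternionBasis_liftHom_bijective h2 ha))⟩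

end Split

theorem quotientMk_X_pow_eq_aeval {k : Type*} [CommRing k] (n : ℕ) (p : k[X]) :
    Ideal.Quotient.mk (Ideal.span {(X ^ n - C p : k[X][X])}) X ^ n =
      aeval (Ideal.Quotient.mk (Ideal.span {(X ^ n - C p : k[X][X])}) (C X)) p := by
  set I : Ideal k[X][X] := Ideal.span {X ^ n - C p}
  calc Ideal.Quotient.mk I X ^ n
    _ = Ideal.Quotient.mk I (C p) := by
      rw [← map_pow, Ideal.Quotient.eq]
      exact Ideal.mem_span_singleton_self _
    _ = ((Ideal.Quotient.mkₐ k I).comp CAlgHom) (aeval X p) := by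
      rw [aeval_X_left_apply]
      rfl
    _ = aeval (Ideal.Quotient.mk I (C X)) p := (aeval_algHom_apply _ X p).symm

theorem exists_sq_eq_mul_pow_four_add {k R : Type*} [CommRing k] [CommRing R] [Algebra k R]
    {a b : k}
    (f : (k[X][X] ⧸ Ideal.span {(X ^ 2 - C (C a * X ^ 4 + C b) : k[X][X])}) →ₐ[k] R) :
    ∃ x y : R, y ^ 2 = algebraMap k R a * x ^ 4 + algebraMap k R b := by
  refine ⟨f (Ideal.Quotient.mk _ (C X)), f (Ideal.Quotient.mk _ X), ?_⟩
  rw [← map_pow, quotientMk_X_pow_eq_aeval, ← aeval_algHom_apply]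
  simp only [map_add, map_mul, aeval_C, map_pow, aeval_X]

theorem quaternion_split_over_hyperelliptic_functionField_general {k : Type*} [CommRing k]
    {a b : k} (h2 : IsUnit (2 : k)) (ha : IsUnit a) (hb : IsUnit b)
    {R : Type*} [CommRing R] [Algebra k R]
    (e : R ≃ₐ[k] (k[X][X] ⧸ Ideal.span {(X ^ 2 - C (C a * X ^ 4 + C b) : k[X][X])}))
    (K : Type*) [CommRing K] [Algebra R K] :
    Nonempty (ℍ[K,algebraMap R K (algebraMap k R a),algebraMap R K (algebraMap k R b)]
      ≃ₐ[K] Matrix (Fin 2) (Fin 2) K) := by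
  let ι : k →+* K := (algebraMap R K).comp (algebraMap k R)
  obtain ⟨x, y, hxy⟩ := exists_sq_eq_mul_pow_four_add e.symm.toAlgHom
  have h2K : IsUnit (2 : K) := map_ofNat ι 2 ▸ h2.map ι
  have hnorm : algebraMap R K y ^ 2 = ι a * (algebraMap R K x ^ 2) ^ 2 + ι b := by
    simpa only [ι, RingHom.comp_apply, map_add, map_mul, map_pow, ← pow_mul, Nat.reduceMul]
      using congrArg (algebraMap R K) hxy
  exact nonempty_quaternionAlgebra_algEquiv_matrix h2K (ha.map ι) (hb.map ι) hnorm

/-- (Section 5.2.1, following Han.) Let `k` be a field with `char k ≠ 2`, let `a, b ∈ k` be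
nonzero, and suppose `Y² - (aX⁴ + b)` is irreducible in `k[X][Y]`, so that the coordinate ring
`R = k[X,Y]/(Y² - aX⁴ - b)` is a domain. Let `K` be the fraction field of `R` (the function
field of the genus one curve `y² = ax⁴ + b`). Then the quaternion algebra `(a, b)_K` is split:
it is isomorphic as a `K`-algebra to `Mat₂(K)`. -/
theorem quaternion_split_over_hyperelliptic_functionField (k : Type) [Field k]
    (hchar : ringChar k ≠ 2) (a b : k) (ha : a ≠ 0) (hb : b ≠ 0)
    (hirr : Irreducible (X ^ 2 - C (C a * X ^ 4 + C b) : Polynomial (Polynomial k)))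
    (R : Type) [CommRing R] [Algebra k R]
    (e : R ≃ₐ[k] (Polynomial (Polynomial k) ⧸
      Ideal.span {(X ^ 2 - C (C a * X ^ 4 + C b) : Polynomial (Polynomial k))}))
    (K : Type) [Field K] [Algebra R K] [IsFractionRing R K] :
    Nonempty (ℍ[K, algebraMap R K (algebraMap k R a), algebraMap R K (algebraMap k R b)]
      ≃ₐ[K] Matrix (Fin 2) (Fin 2) K) := by
  have h2 : IsUnit (2 : k) := (Ring.two_ne_zero hchar).isUnit
  exact quaternion_split_over_hyperelliptic_functionField_general h2 ha.isUnit hb.isUnit e K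
end

section
/- Let L be a field and let (L_i)_{i ∈ I} be a directed family of subfields of L (for any i, j there is m with L_i ⊆ L_m and L_j ⊆ L_m) whose union is all of L. Fix an index i₀ and let A be a finite-dimensional central simple algebra over F = L_{i₀}. If the base change A ⊗_F L is isomorphic as an L-algebra to a matrix algebra Mat_d(L), then there exists an index j with F ⊆ L_j such that A ⊗_F L_j is isomorphic as an L_j-algebra to the matrix algebra Mat_d(L_j). -/
open scoped TensorProduct

/-!
An isomorphism `φ : L ⊗ A ≃ L ⊗ B` with `A` finitely generated is determined by the images of
finitely many generators of `A`. These images involve only finitely many scalars of `L`, so over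
any intermediate `K` containing them `φ` restricts to a homomorphism `g : K ⊗ A → K ⊗ B`. The base
change of `g` to `L` is `φ`, hence `g` is an isomorphism as soon as `L` is faithfully flat over `K`.
For a directed union of subfields, the finitely many scalars all lie in a single member. A split
algebra is the case where `B` is a matrix algebra.
-/

open Algebra.TensorProduct (includeRight)

/-- The isomorphism `L ⊗ Mat_n(F) ≃ Mat_n(L)`: Mathlib's `matrixEquivTensor`, inverted and regarded
as linear over the larger base `L`. It presents split algebras as base changes. -/
def matrixBaseChangeEquiv (F L n : Type*) [CommSemiring F] [CommSemiring L] [Algebra F L]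
    [Fintype n] [DecidableEq n] : L ⊗[F] Matrix n n F ≃ₐ[L] Matrix n n L :=
  { (matrixEquivTensor n F L).symm with
    commutes' x := by
      change (matrixEquivTensor n F L).symm (x ⊗ₜ 1) = algebraMap L (Matrix n n L) x
      simp [Algebra.algebraMap_eq_smul_one] }

section Tower

variable (F K L A : Type*) [CommSemiring F] [CommSemiring K] [CommSemiring L] [Semiring A]
  [Algebra F K] [Algebra F L] [Algebra K L] [IsScalarTower F K L] [Algebra F A]

/-- The extension of scalars `K ⊗ A → L ⊗ A` along `F → K → L`. Its range consists of the elements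
of `L ⊗ A` that are defined over `K`. -/
def baseChangeMap : K ⊗[F] A →ₐ[K] L ⊗[F] A :=
  Algebra.TensorProduct.map (Algebra.ofId K L) (AlgHom.id F A)

/-- Transitivity of base change, `L ⊗ (K ⊗ A) ≃ L ⊗ A`. Unlike
`Algebra.TensorProduct.cancelBaseChange`, it does not require `A` to be commutative. -/
def baseChangeTransEquiv : L ⊗[K] (K ⊗[F] A) ≃ₐ[L] L ⊗[F] A :=
  (Algebra.TensorProduct.assoc F K L L K A).symm.trans
    (Algebra.TensorProduct.congr (Algebra.TensorProduct.rid K L L) .refl)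

variable {F K L A}

theorem baseChangeMap_tmul (k : K) (a : A) :
    baseChangeMap F K L A (k ⊗ₜ a) = algebraMap K L k ⊗ₜ a :=
  rfl

theorem baseChangeTransEquiv_one_tmul (x : K ⊗[F] A) :
    baseChangeTransEquiv F K L A (1 ⊗ₜ x) = baseChangeMap F K L A x := by
  induction x with
  | zero => simp only [TensorProduct.tmul_zero, map_zero]
  | add x y hx hy => simp only [TensorProduct.tmul_add, map_add, hx, hy]
  | tmul k a => simp [baseChangeTransEquiv, baseChangeMap_tmul, Algebra.smul_def]

end Tower

theorem exists_finset_forall_subset_range_baseChangeMap {F L B : Type*} [CommSemiring F]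
    [CommSemiring L] [Algebra F L] [Semiring B] [Algebra F B] {t : Set (L ⊗[F] B)}
    (ht : t.Finite) :
    ∃ s : Finset L, ∀ (K : Type*) [CommSemiring K] [Algebra F K] [Algebra K L]
      [IsScalarTower F K L], (s : Set L) ⊆ Set.range (algebraMap K L) →
        t ⊆ (baseChangeMap F K L B).range := by
  obtain ⟨M, M_finite, t_subset⟩ := TensorProduct.exists_finite_submodule_left_of_setFinite t ht
  obtain ⟨s, span_s⟩ := Module.Finite.iff_fg.mp M_finite
  refine ⟨s, fun K _ _ _ _ s_subset ↦ ?_⟩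
  have M_le : M ≤ LinearMap.range (IsScalarTower.toAlgHom F K L).toLinearMap :=
    span_s ▸ Submodule.span_le.mpr s_subset
  have rTensor_mem (y : M ⊗[F] B) : M.subtype.rTensor B y ∈ (baseChangeMap F K L B).range := by
    induction y with
    | zero => simp only [map_zero, zero_mem]
    | add y z hy hz => simpa only [map_add] using add_mem hy hz
    | tmul m b =>
      obtain ⟨k, algebraMap_k⟩ := M_le m.2
      exact ⟨k ⊗ₜ b, congrArg (· ⊗ₜ b) algebraMap_k⟩
  intro x x_mem
  obtain ⟨y, rfl⟩ := t_subset x_mem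
  exact rTensor_mem y

theorem nonempty_algEquiv_of_baseChange {K L X Y : Type*} [CommRing K] [CommRing L] [Algebra K L]
    [Module.FaithfullyFlat K L] [Ring X] [Algebra K X] [Ring Y] [Algebra K Y]
    (φ : L ⊗[K] X ≃ₐ[L] L ⊗[K] Y)
    (hφ : ∀ x : X, φ (1 ⊗ₜ x) ∈ (includeRight : Y →ₐ[K] L ⊗[K] Y).range) :
    Nonempty (X ≃ₐ[K] Y) := by
  let ι : Y →ₐ[K] L ⊗[K] Y := includeRight
  have ι_injective : Function.Injective ι := Module.FaithfullyFlat.tensorProduct_mk_injective Y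
  let g : X →ₐ[K] Y := (AlgEquiv.ofInjective ι ι_injective).symm.toAlgHom.comp
    (((φ.toAlgHom.restrictScalars K).comp includeRight).codRestrict ι.range hφ)
  have one_tmul_g (x : X) : 1 ⊗ₜ g x = φ (1 ⊗ₜ x) :=
    congrArg Subtype.val ((AlgEquiv.ofInjective ι ι_injective).apply_symm_apply ⟨_, hφ x⟩)
  have baseChange_g : g.toLinearMap.baseChange L = φ.toLinearMap := by
    ext x
    exact one_tmul_g x
  have g_bijective : Function.Bijective g.toLinearMap := by
    rw [← Module.FaithfullyFlat.lTensor_bijective_iff_bijective K L,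
      ← LinearMap.baseChange_eq_ltensor (A := L), baseChange_g]
    exact φ.bijective
  exact ⟨AlgEquiv.ofBijective g g_bijective⟩

section Descent

variable {F L A B : Type*} [CommRing F] [CommRing L] [Algebra F L] [Ring A] [Algebra F A]
  [Ring B] [Algebra F B]

theorem nonempty_baseChange_algEquiv_of_adjoin_eq_top {K : Type*} [CommRing K] [Algebra F K]
    [Algebra K L] [IsScalarTower F K L] [Module.FaithfullyFlat K L]
    (φ : L ⊗[F] A ≃ₐ[L] L ⊗[F] B) {t : Set A} (ht : Algebra.adjoin F t = ⊤)
    (hφ : ∀ a ∈ t, φ (1 ⊗ₜ a) ∈ (baseChangeMap F K L B).range) :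
    Nonempty (K ⊗[F] A ≃ₐ[K] K ⊗[F] B) := by
  have map_mem_range (x : K ⊗[F] A) :
      φ (baseChangeMap F K L A x) ∈ (baseChangeMap F K L B).range := by
    let f : K ⊗[F] A →ₐ[K] L ⊗[F] B :=
      (φ.toAlgHom.restrictScalars K).comp (baseChangeMap F K L A)
    have adjoin_le : Algebra.adjoin K ((fun a : A ↦ (1 : K) ⊗ₜ[F] a) '' t) ≤
        (baseChangeMap F K L B).range.comap f := by
      refine Algebra.adjoin_le ?_
      rintro _ ⟨a, a_mem, rfl⟩
      simpa [f, baseChangeMap_tmul] using hφ a a_mem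
    rw [Algebra.TensorProduct.adjoin_one_tmul_image_eq_top t ht] at adjoin_le
    exact adjoin_le Algebra.mem_top
  refine nonempty_algEquiv_of_baseChange (L := L) ((baseChangeTransEquiv F K L A).trans
    (φ.trans (baseChangeTransEquiv F K L B).symm)) fun x ↦ ?_
  obtain ⟨y, hy⟩ := map_mem_range x
  refine ⟨y, (baseChangeTransEquiv F K L B).injective ?_⟩
  simpa [baseChangeTransEquiv_one_tmul] using hy

theorem exists_finset_forall_nonempty_baseChange_algEquiv [Algebra.FiniteType F A]
    (φ : L ⊗[F] A ≃ₐ[L] L ⊗[F] B) :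
    ∃ s : Finset L, ∀ (K : Type*) [CommRing K] [Algebra F K] [Algebra K L] [IsScalarTower F K L]
      [Module.FaithfullyFlat K L], (s : Set L) ⊆ Set.range (algebraMap K L) →
        Nonempty (K ⊗[F] A ≃ₐ[K] K ⊗[F] B) := by
  obtain ⟨t, adjoin_t⟩ := Algebra.FiniteType.out (R := F) (A := A)
  obtain ⟨s, hs⟩ := exists_finset_forall_subset_range_baseChangeMap
    (t.finite_toSet.image fun a ↦ φ (1 ⊗ₜ a))
  exact ⟨s, fun K _ _ _ _ _ s_subset ↦ nonempty_baseChange_algEquiv_of_adjoin_eq_top φ adjoin_t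
    fun a a_mem ↦ hs K s_subset (Set.mem_image_of_mem _ a_mem)⟩

end Descent

theorem exists_subset_and_finset_subset_of_directed {ι α : Type*} {f : ι → Set α}
    (hf : Directed (· ⊆ ·) f) (hunion : ∀ x, ∃ i, x ∈ f i) (i₀ : ι) (s : Finset α) :
    ∃ j, f i₀ ⊆ f j ∧ (s : Set α) ⊆ f j := by
  have : Nonempty ι := ⟨i₀⟩
  obtain ⟨i, s_subset⟩ := hf.exists_mem_subset_of_finset_subset_biUnion (s := s)
    fun x _ ↦ Set.mem_iUnion.mpr (hunion x)
  obtain ⟨j, i₀_subset, i_subset⟩ := hf i₀ i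
  exact ⟨j, i₀_subset, s_subset.trans i_subset⟩

theorem csa_split_at_finite_stage_general {L I : Type*} [Field L] {Li : I → Subfield L}
    (hdir : Directed (· ≤ ·) Li) (hunion : ∀ x : L, ∃ i, x ∈ Li i) (i₀ : I)
    {A B : Type*} [Ring A] [Algebra (Li i₀) A] [Algebra.FiniteType (Li i₀) A]
    [Ring B] [Algebra (Li i₀) B]
    (φ : L ⊗[Li i₀] A ≃ₐ[L] L ⊗[Li i₀] B) :
    ∃ j, ∃ h : Li i₀ ≤ Li j,
      Nonempty (letI := (Subfield.inclusion h).toAlgebra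
        ((Li j ⊗[Li i₀] A) ≃ₐ[Li j] (Li j ⊗[Li i₀] B))) := by
  obtain ⟨s, hs⟩ := exists_finset_forall_nonempty_baseChange_algEquiv φ
  obtain ⟨j, h, s_subset⟩ :=
    exists_subset_and_finset_subset_of_directed (f := fun i ↦ (Li i : Set L)) hdir hunion i₀ s
  let := (Subfield.inclusion h).toAlgebra
  have : IsScalarTower (Li i₀) (Li j) L := .of_algebraMap_eq fun _ ↦ rfl
  exact ⟨j, h, hs (Li j) fun x hx ↦ ⟨⟨x, s_subset hx⟩, rfl⟩⟩

/-- (Key claim in the proof of Theorem 4.9.) Let `L` be a field that is the directed union of a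
family of subfields `(Lᵢ)`, and let `A` be a finite-dimensional central simple algebra over
`F = L_{i₀}`. If `A ⊗_F L` is isomorphic to `Mat_d(L)`, then there is an index `j` with
`F ⊆ L_j` such that `A ⊗_F L_j` is already isomorphic to `Mat_d(L_j)`. -/
theorem csa_split_at_finite_stage (L : Type) [Field L] (I : Type) (Li : I → Subfield L)
    (hdir : ∀ i j, ∃ m, Li i ≤ Li m ∧ Li j ≤ Li m)
    (hunion : ∀ x : L, ∃ i, x ∈ Li i)
    (i₀ : I) (A : Type) [Ring A] [Algebra (Li i₀) A]
    [FiniteDimensional (Li i₀) A] [Algebra.IsCentral (Li i₀) A] [IsSimpleRing A]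
    (d : ℕ)
    (hsplit : Nonempty ((L ⊗[Li i₀] A) ≃ₐ[L] Matrix (Fin d) (Fin d) L)) :
    ∃ j, ∃ h : Li i₀ ≤ Li j,
      Nonempty (letI := (Subfield.inclusion h).toAlgebra
        ((Li j ⊗[Li i₀] A) ≃ₐ[Li j] Matrix (Fin d) (Fin d) (Li j))) := by
  obtain ⟨φ⟩ := hsplit
  obtain ⟨j, h, ⟨ψ⟩⟩ := csa_split_at_finite_stage_general hdir hunion i₀
    (φ.trans (matrixBaseChangeEquiv (Li i₀) L (Fin d)).symm)
  let := (Subfield.inclusion h).toAlgebra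
  exact ⟨j, h, ⟨ψ.trans (matrixBaseChangeEquiv (Li i₀) (Li j) (Fin d))⟩⟩
end
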